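/- Let w be a word of length n in the letters u_1^{±1}, ..., u_N^{±1} whose cyclic reduction has length k ≥ 1, and let w' and w'' be two cyclic permutations of w, both having good reduction. Then the unique w'-admissible half-pairing and the unique w''-admissible half-pairing, when rotated back to the original indexing of the letters of w, coincide as half-pairings on [n]. Consequently every word w (with cyclic reduction of positive length) carries a canonical half-pairing, independent of which cyclic permutation with good reduction is used to construct it. -/

import Mathlib

/-!
An admissible half-pairing is determined by the word, and every condition defining it is invariant
under rotation; this gives the theorem. No base point is needed once the circle is unrolled to `ℤ`
and the word to a periodic bi-infinite word `u` (`Unrolled`, `unrolled_lift`). Since the half-pairing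
is non-crossing and has a through string, each point of `ℤ` is a through string, an opener or a
closer; the first two kinds are the outward points.

Read `u` from left to right starting at an outward point `p`, pushing outward points on a stack and
letting closers pop. A closer always closes the top of the stack, whose letter is inverse to its own.
An outward point is covered by the top of the stack, so admissibility forbids their letters to
cancel. Hence the stack always spells the reduced form of the word read so far
(`Unrolled.exists_stack`, `IsStack.reduce_eq`). Two consequences:

* For a through string `p < j`, the point `j` is a closer iff its letter cancels against the last
  letter of the reduction of `u` on `[p, j)` (`Unrolled.out_iff`). Through strings are never popped,
  so this reduction becomes arbitrarily long as `p` moves to the left, and a bounded change of the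
  starting point then does not affect its last letter (`getLast?_reduce_append`). So two admissible
  pairings of `u` have the same closers (`Unrolled.out_iff_out`).
* The mate of a closer `j` is the last `i < j` for which `u` on `[i, j]` reduces to `1`
  (`Unrolled.mate_le`), which depends on `u` alone.

Thus two admissible pairings of `u` agree (`Unrolled.mate_imp`), and rolling `ℤ` up again yields the
equality of the two half-pairings on `[n]`.
-/

namespace NCC

/-- A letter `u_i^{±1}`: a generator index together with a sign. -/
abbrev Letter (N : ℕ) := Fin N × Bool

/-- The inverse of a letter. -/
def linv {N : ℕ} (l : Letter N) : Letter N := (l.1, !l.2)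

/-- One cyclic reduction step: either a linear reduction step (removal of two
adjacent letters which are inverses of each other), or removal of the first and
last letters when they are inverses of each other. -/
def CyclicStep {N : ℕ} (w w' : List (Letter N)) : Prop :=
  FreeGroup.Red.Step w w' ∨
    ∃ (l : Letter N) (m : List (Letter N)), w = l :: (m ++ [linv l]) ∧ w' = m

/-- `w` reduces cyclically (in zero or more steps) to `v`. -/
def CycReducesTo {N : ℕ} (w v : List (Letter N)) : Prop :=
  Relation.ReflTransGen CyclicStep w v

/-- A word is linearly reduced when no two adjacent letters are inverses of
each other. -/
def LinReduced {N : ℕ} (w : List (Letter N)) : Prop :=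
  List.Chain' (fun a b => b ≠ linv a) w

/-- A word is cyclically reduced iff `w ++ w` is linearly reduced, i.e. it is
linearly reduced and its last letter is not the inverse of its first letter. -/
def CycReduced {N : ℕ} (w : List (Letter N)) : Prop :=
  LinReduced (w ++ w)

/-- A word is reducible to 1 if it linearly reduces to the empty word. -/
def ReducibleToOne {N : ℕ} (w : List (Letter N)) : Prop :=
  FreeGroup.Red w []

/-- A word has good reduction: no nonempty prefix is reducible to 1, and its
linear reduction is cyclically reduced. -/
def GoodReduction {N : ℕ} (w : List (Letter N)) : Prop :=
  (∀ s, s <+: w → s ≠ [] → ¬ ReducibleToOne s) ∧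
    CycReduced (FreeGroup.reduce w)

/-- The first `i` letters of the infinite word `w_∞ = w w w ⋯`. -/
def infTake {N : ℕ} (w : List (Letter N)) (i : ℕ) : List (Letter N) :=
  ((List.replicate i w).flatten).take i

open scoped Classical

/-- `i` and `j` lie in a common block of the partition `P`. -/
def Rel {n : ℕ} (P : Finpartition (Finset.univ : Finset (Fin n))) (i j : Fin n) : Prop :=
  ∃ B ∈ P.parts, i ∈ B ∧ j ∈ B

/-- `i` lies in a singleton block of `P`. -/
def IsSingleton {n : ℕ} (P : Finpartition (Finset.univ : Finset (Fin n))) (i : Fin n) : Prop :=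
  ∃ B ∈ P.parts, i ∈ B ∧ B.card = 1

/-- The relation of the partition `π̃` obtained from `P` by merging all
singleton blocks into a single block. -/
def RelTilde {n : ℕ} (P : Finpartition (Finset.univ : Finset (Fin n))) (i j : Fin n) : Prop :=
  Rel P i j ∨ (IsSingleton P i ∧ IsSingleton P j)

/-- An equivalence-like relation on `[n]` is non-crossing when there are no
`i₁ < i₂ < i₃ < i₄` with `i₁ ∼ i₃`, `i₂ ∼ i₄` but `i₁ ≁ i₂`. -/
def NonCrossingRel {n : ℕ} (r : Fin n → Fin n → Prop) : Prop :=
  ∀ i1 i2 i3 i4 : Fin n, i1 < i2 → i2 < i3 → i3 < i4 → r i1 i3 → r i2 i4 → r i1 i2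

/-- A non-crossing half-pairing on `[n]`: a non-crossing partition all of whose
blocks have at most two elements, with at least one singleton block (through
string), such that merging all singleton blocks still gives a non-crossing
partition. -/
structure HalfPairing (n : ℕ) where
  P : Finpartition (Finset.univ : Finset (Fin n))
  card_le : ∀ B ∈ P.parts, B.card ≤ 2
  exists_singleton : ∃ i, IsSingleton P i
  nc : NonCrossingRel (Rel P)
  nc_tilde : NonCrossingRel (RelTilde P)

/-- `r` and `s` form a pair (a two-element block) of `π`. -/
def Pairs {n : ℕ} (π : HalfPairing n) (r s : Fin n) : Prop :=
  r ≠ s ∧ Rel π.P r s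

/-- Membership in the cyclic interval `[i, j]` (going clockwise from `i` to
`j`, endpoints included). -/
def InCyc {n : ℕ} (i j x : Fin n) : Prop :=
  (x.val + n - i.val) % n ≤ (j.val + n - i.val) % n

/-- Cyclic successor of `i` in `[n]`. -/
def cnext {n : ℕ} (i : Fin n) : Fin n :=
  ⟨(i.val + 1) % n, Nat.mod_lt _ i.pos⟩

/-- Cyclic predecessor of `i` in `[n]`. -/
def cprev {n : ℕ} (i : Fin n) : Fin n :=
  ⟨(i.val + n - 1) % n, Nat.mod_lt _ i.pos⟩

/-- `a + j` modulo `n`. -/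
def cadd {n : ℕ} (a j : Fin n) : Fin n :=
  ⟨(a.val + j.val) % n, Nat.mod_lt _ a.pos⟩

/-- `x - a` modulo `n`. -/
def csub {n : ℕ} (x a : Fin n) : Fin n :=
  ⟨(x.val + n - a.val) % n, Nat.mod_lt _ a.pos⟩

/-- `i` has the outward orientation: it is a singleton, or it is the point of a
pair `(i, s)` such that the cyclic interval `[i, s]` contains no singleton. -/
def OutOriented {n : ℕ} (π : HalfPairing n) (i : Fin n) : Prop :=
  IsSingleton π.P i ∨
    ∃ s, Pairs π i s ∧ ∀ x, InCyc i s x → ¬ IsSingleton π.P x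

/-- `i` covers `j`: both are outward oriented, and either `j` is the cyclic
successor of `i`, or `π` pairs each point of the cyclic interval
`[i+1, j-1]` with another point of `[i+1, j-1]`. -/
def Covers {n : ℕ} (π : HalfPairing n) (i j : Fin n) : Prop :=
  OutOriented π i ∧ OutOriented π j ∧
    (j = cnext i ∨
      ∀ x, InCyc (cnext i) (cprev j) x →
        ∃ y, y ≠ x ∧ InCyc (cnext i) (cprev j) y ∧ Pairs π x y)

/-- The set of through strings (singleton blocks) of `π`. -/
noncomputable def throughFinset {n : ℕ} (π : HalfPairing n) : Finset (Fin n) :=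
  Finset.univ.filter (fun i => IsSingleton π.P i)

/-- The word formed by the letters of `w` at the through strings of `π`,
read in increasing order of position. -/
noncomputable def throughWord {n N : ℕ} (w : Fin n → Letter N) (π : HalfPairing n) :
    List (Letter N) :=
  ((throughFinset π).sort (· ≤ ·)).map w

/-- `π` is a `w`-pairing: paired positions carry mutually inverse letters, and
the through-string letters, read in order, form a cyclic reduction of `w`. -/
def IsWPairing {n N : ℕ} (w : Fin n → Letter N) (π : HalfPairing n) : Prop :=
  (∀ r s, Pairs π r s → w r = linv (w s)) ∧
    CycReducesTo (List.ofFn w) (throughWord w π) ∧ CycReduced (throughWord w π)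

/-- `π` is `w`-admissible: it is a `w`-pairing and `l_i ≠ l_j⁻¹` whenever
`i` covers `j`. -/
def Admissible {n N : ℕ} (w : Fin n → Letter N) (π : HalfPairing n) : Prop :=
  IsWPairing w π ∧ ∀ i j, Covers π i j → w i ≠ linv (w j)

/-! ### Letters and last letters of reduced words -/

theorem linv_linv {N : ℕ} (l : Letter N) : linv (linv l) = l := by
  simp [linv]

theorem linv_ne_self {N : ℕ} (l : Letter N) : l ≠ linv l := by
  intro h
  have := congrArg Prod.snd h
  simp [linv] at this

theorem mk_mul_mk_linv {N : ℕ} (l : Letter N) :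
    FreeGroup.mk [l] * FreeGroup.mk [linv l] = 1 := by
  have : FreeGroup.mk [linv l] = (FreeGroup.mk [l])⁻¹ := by
    simp [FreeGroup.inv_mk, FreeGroup.invRev, linv]
  rw [this, mul_inv_cancel]

/-- Multiplying a word on the left by `x` changes at most `|x|` letters of its reduction, all of
them at the front: a reduction longer than `|x|` keeps its last letter. -/
theorem getLast?_reduce_append {α : Type*} [DecidableEq α] (x y : List (α × Bool))
    (h : x.length < (FreeGroup.reduce y).length) :
    (FreeGroup.reduce (x ++ y)).getLast? = (FreeGroup.reduce y).getLast? := by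
  have key : (FreeGroup.reduce y).length ≤ (FreeGroup.reduce (x ++ y)).length + x.length ∧
      (FreeGroup.reduce (x ++ y)).getLast? = (FreeGroup.reduce y).getLast? := by
    induction x with
    | nil => simp
    | cons a x ih =>
      simp only [List.length_cons] at h
      obtain ⟨h1, h2⟩ := ih (by omega)
      rw [List.cons_append, FreeGroup.reduce.cons]
      rcases hz : FreeGroup.reduce (x ++ y) with _ | ⟨c, tl⟩
      · simp [hz] at h1
        omega
      · rw [hz] at h1 h2
        simp only [List.length_cons] at h1 ⊢
        have htl : tl ≠ [] := by
          rintro rfl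
          simp at h1
          omega
        obtain ⟨d, tl', rfl⟩ := List.exists_cons_of_ne_nil htl
        split_ifs
        · refine ⟨by simp at h1 ⊢; omega, ?_⟩
          rw [← h2, List.getLast?_cons_cons]
        · refine ⟨by simp at h1 ⊢; omega, ?_⟩
          rw [← h2, List.getLast?_cons_cons]
  exact key.2

/-- The `m` letters of the bi-infinite word `u` starting at position `p`. -/
def seg {N : ℕ} (u : ℤ → Letter N) (p : ℤ) (m : ℕ) : List (Letter N) :=
  (List.range m).map fun i : ℕ => u (p + i)

theorem seg_succ {N : ℕ} (u : ℤ → Letter N) (p : ℤ) (m : ℕ) :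
    seg u p (m + 1) = seg u p m ++ [u (p + m)] := by
  simp [seg, List.range_succ]

theorem seg_add {N : ℕ} (u : ℤ → Letter N) (p : ℤ) (l m : ℕ) :
    seg u p (l + m) = seg u p l ++ seg u (p + l) m := by
  simp [seg, List.range_add, add_assoc]

theorem length_seg {N : ℕ} (u : ℤ → Letter N) (p : ℤ) (m : ℕ) : (seg u p m).length = m := by
  simp [seg]

/-! ### Admissible pairings of a bi-infinite word -/

/-- Every point strictly between `i` and `j` is paired by `M` with another such point. -/
def Balanced (M : ℤ → ℤ → Prop) (i j : ℤ) : Prop :=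
  ∀ z, i < z → z < j → ∃ v, i < v ∧ v < j ∧ (M z v ∨ M v z)

/-- `i` is a through string or the opener of a pair. -/
def Out (S : ℤ → Prop) (M : ℤ → ℤ → Prop) (i : ℤ) : Prop := S i ∨ ∃ j, M i j

/-- The unrolled form of an admissible half-pairing: a non-crossing pairing of `ℤ` whose through
strings are the points of the `n`-periodic set `S`, and where `M i j` means that `i < j` are paired
(`i` is the opener, `j` the closer). -/
structure Unrolled {N : ℕ} (n : ℕ) (u : ℤ → Letter N) (S : ℤ → Prop) (M : ℤ → ℤ → Prop) :
    Prop where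
  periodic : ∀ x (k : ℤ), S x → S (x + k * n)
  nonempty : ∃ x, S x
  lt : ∀ {i j}, M i j → i < j
  right_unique : ∀ {i j j'}, M i j → M i j' → j = j'
  left_unique : ∀ {i i' j}, M i j → M i' j → i = i'
  not_chain : ∀ {i j k}, M i j → ¬ M j k
  not_S_left : ∀ {i j}, M i j → ¬ S i
  not_S_right : ∀ {i j}, M i j → ¬ S j
  total : ∀ x, Out S M x ∨ ∃ i, M i x
  balanced : ∀ {i j}, M i j → Balanced M i j
  inv : ∀ {i j}, M i j → u j = linv (u i)
  adm : ∀ {i j}, Out S M i → Out S M j → i < j → Balanced M i j → u i ≠ linv (u j)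

section

variable {N n : ℕ} {u : ℤ → Letter N} {S : ℤ → Prop} {M : ℤ → ℤ → Prop}

theorem Unrolled.not_out (U : Unrolled n u S M) {i j : ℤ} (h : M i j) : ¬ Out S M j := by
  rintro (hS | ⟨k, hk⟩)
  · exact U.not_S_right h hS
  · exact U.not_chain h hk

/-- The invariants of the stack `L` (top first) of outward points in `[p, p + m)` which are not
closed before `p + m`: it contains `p` and all through strings in that range, everything between
consecutive entries and above the top is paired off, and its letters, read from the bottom, spell
the free group element of the segment `[p, p + m)`. -/
structure IsStack (u : ℤ → Letter N) (S : ℤ → Prop) (M : ℤ → ℤ → Prop) (p : ℤ) (m : ℕ)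
    (L : List ℤ) : Prop where
  mem : p ∈ L
  chain : L.IsChain fun x y => y < x ∧ Balanced M y x
  out : ∀ x ∈ L, Out S M x
  top : ∀ x ∈ L.head?, x < p + m ∧ Balanced M x (p + m)
  ge : ∀ x ∈ L, p ≤ x
  sing : ∀ x, S x → p ≤ x → x < p + m → x ∈ L
  mk_eq : FreeGroup.mk (seg u p m) = FreeGroup.mk (L.map u).reverse

/-- A closer always closes the top of the stack. -/
theorem IsStack.top_eq (U : Unrolled n u S M) {p : ℤ} {m : ℕ} {x : ℤ} {L : List ℤ}
    (h : IsStack u S M p m (x :: L)) {i : ℤ} (hi : M i (p + m)) : i = x := by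
  obtain ⟨hx, hb⟩ := h.top x (by simp)
  have hox := h.out x (by simp)
  rcases lt_trichotomy i x with hlt | heq | hgt
  · -- the pair of `i` and `p + m` encloses `x`, so the mate of `x` lies before `p + m`
    exfalso
    obtain ⟨y, _, hy2, hy | hy⟩ := U.balanced hi x hlt hx
    · obtain ⟨v, hv1, hv2, hv | hv⟩ := hb y (U.lt hy) hy2
      · exact U.not_chain hy hv
      · have := U.left_unique hv hy
        omega
    · exact U.not_out hy hox
  · exact heq
  · exfalso
    obtain ⟨v, hv1, hv2, hv | hv⟩ := hb i hgt (U.lt hi)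
    · have := U.right_unique hi hv
      omega
    · exact U.not_chain hv hi

/-- Consecutive stack entries cover one another, so by admissibility the stack spells a reduced
word. -/
theorem IsStack.reduce_eq (U : Unrolled n u S M) {p : ℤ} {m : ℕ} {L : List ℤ}
    (h : IsStack u S M p m L) : FreeGroup.reduce (seg u p m) = (L.map u).reverse := by
  have hred : FreeGroup.IsReduced (L.map u).reverse := by
    rw [FreeGroup.IsReduced, List.isChain_reverse, List.isChain_map]
    refine h.chain.imp_of_mem_imp ?_
    rintro x y hx hy ⟨hlt, hb⟩ h1
    have hne := U.adm (h.out y hy) (h.out x hx) hlt hb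
    by_contra h2
    apply hne
    refine Prod.ext h1 ?_
    simpa [linv] using Bool.eq_not_of_ne h2
  have := congrArg FreeGroup.toWord h.mk_eq
  rwa [FreeGroup.toWord_mk, FreeGroup.toWord_mk, hred.reduce_eq] at this

/-- Starting from an outward point `p`, the stack stays nonempty until `p` is closed. -/
theorem Unrolled.exists_stack (U : Unrolled n u S M) {p : ℤ} (hp : Out S M p) (m : ℕ)
    (hm : ∀ j, M p j → p + m + 1 ≤ j) : ∃ L, IsStack u S M p (m + 1) L := by
  induction m with
  | zero =>
    refine ⟨[p], ⟨by simp, by simp, by simpa using hp, ?_, by simp, ?_, ?_⟩⟩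
    · simp only [List.head?_cons, Option.mem_some_iff, forall_eq']
      refine ⟨by omega, fun z h1 h2 => by push_cast at h2; omega⟩
    · intro x _ h1 h2
      push_cast at h2
      simp
      omega
    · simp [seg]
  | succ m ih =>
    obtain ⟨L, hL⟩ := ih fun j hj => by have := hm j hj; push_cast at this; omega
    obtain ⟨x, L, rfl⟩ := List.exists_cons_of_ne_nil (List.ne_nil_of_mem hL.mem)
    obtain ⟨hx, hb⟩ := hL.top x (by simp)
    rcases U.total (p + (m + 1 : ℕ)) with ho | ⟨i, hi⟩
    · refine ⟨(p + (m + 1 : ℕ)) :: x :: L, ⟨List.mem_cons_of_mem _ hL.mem, ?_, ?_, ?_, ?_, ?_, ?_⟩⟩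
      · exact List.isChain_cons_cons.2 ⟨⟨hx, hb⟩, hL.chain⟩
      · intro y hy
        rcases List.mem_cons.1 hy with rfl | hy
        · exact ho
        · exact hL.out y hy
      · simp only [List.head?_cons, Option.mem_some_iff, forall_eq']
        refine ⟨by push_cast; omega, fun z h1 h2 => by push_cast at h1 h2; omega⟩
      · intro y hy
        rcases List.mem_cons.1 hy with rfl | hy
        · omega
        · exact hL.ge y hy
      · intro y hS h1 h2
        by_cases h3 : y = p + (m + 1 : ℕ)
        · simp [h3]
        · exact List.mem_cons_of_mem _ (hL.sing y hS h1 (by push_cast at h2 h3 ⊢; omega))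
      · rw [seg_succ, ← FreeGroup.mul_mk, hL.mk_eq, FreeGroup.mul_mk, List.map_cons (l := x :: L),
          List.reverse_cons (as := (x :: L).map u)]
    · obtain rfl := hL.top_eq U hi
      have hpL : p ∈ L := by
        refine (List.mem_cons.1 hL.mem).resolve_left ?_
        rintro rfl
        have := hm _ hi
        push_cast at this
        omega
      obtain ⟨y, L, rfl⟩ := List.exists_cons_of_ne_nil (List.ne_nil_of_mem hpL)
      obtain ⟨⟨hyi, hyb⟩, hch⟩ := List.isChain_cons_cons.1 hL.chain
      refine ⟨y :: L, ⟨hpL, hch, ?_, ?_, ?_, ?_, ?_⟩⟩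
      · exact fun z hz => hL.out z (List.mem_cons_of_mem _ hz)
      · simp only [List.head?_cons, Option.mem_some_iff, forall_eq']
        refine ⟨by push_cast at hx ⊢; omega, fun z h1 h2 => ?_⟩
        push_cast at hx hi hb h2 ⊢
        rcases lt_trichotomy z i with h | rfl | h
        · obtain ⟨v, hv1, hv2, hv⟩ := hyb z h1 h
          exact ⟨v, hv1, by omega, hv⟩
        · exact ⟨_, by omega, by omega, Or.inl hi⟩
        · by_cases h3 : z = p + (m + 1)
          · subst h3
            exact ⟨i, hyi, by omega, Or.inr hi⟩
          · obtain ⟨v, hv1, hv2, hv⟩ := hb z h (by omega)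
            exact ⟨v, by omega, by omega, hv⟩
      · exact fun z hz => hL.ge z (List.mem_cons_of_mem _ hz)
      · intro z hS h1 h2
        have hzt : z ≠ p + (m + 1 : ℕ) := by
          rintro rfl
          exact U.not_S_right hi hS
        have hzi : z ≠ i := by
          rintro rfl
          exact U.not_S_left hi hS
        have := hL.sing z hS h1 (by push_cast at h2 hzt ⊢; omega)
        exact (List.mem_cons.1 this).resolve_left hzi
      · rw [seg_succ, ← FreeGroup.mul_mk, hL.mk_eq, U.inv hi, List.map_cons, List.reverse_cons,
          ← FreeGroup.mul_mk, mul_assoc, mk_mul_mk_linv, mul_one]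

theorem Unrolled.mk_seg_ne_one (U : Unrolled n u S M) {i j : ℤ} (h : M i j) {m : ℕ}
    (hm : 0 < m) (hmj : i + m ≤ j) : FreeGroup.mk (seg u i m) ≠ 1 := by
  obtain ⟨m, rfl⟩ : ∃ m', m = m' + 1 := ⟨m - 1, by omega⟩
  obtain ⟨L, hL⟩ := U.exists_stack (p := i) (Or.inr ⟨j, h⟩) m fun j' hj' => by
    have := U.right_unique h hj'
    push_cast at hmj
    omega
  intro h1
  have := congrArg FreeGroup.toWord h1
  rw [FreeGroup.toWord_mk, hL.reduce_eq U, FreeGroup.toWord_one] at this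
  have hmem := hL.mem
  simp at this
  simp [this] at hmem

theorem Unrolled.mk_seg_eq_one (U : Unrolled n u S M) {i : ℤ} {m : ℕ} (hm : 0 < m)
    (h : M i (i + m)) : FreeGroup.mk (seg u i (m + 1)) = 1 := by
  obtain ⟨m, rfl⟩ : ∃ m', m = m' + 1 := ⟨m - 1, by omega⟩
  obtain ⟨L, hL⟩ := U.exists_stack (p := i) (Or.inr ⟨_, h⟩) m fun j' hj' => by
    have := U.right_unique h hj'
    push_cast at this
    omega
  obtain ⟨x, L, rfl⟩ := List.exists_cons_of_ne_nil (List.ne_nil_of_mem hL.mem)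
  obtain rfl := hL.top_eq U h
  have : L = [] := by
    rcases L with _ | ⟨y, L⟩
    · rfl
    · have h1 := (List.isChain_cons_cons.1 hL.chain).1.1
      have h2 := hL.ge y (by simp)
      omega
  subst this
  rw [seg_succ, ← FreeGroup.mul_mk, hL.mk_eq, U.inv h]
  simpa using mk_mul_mk_linv (u i)

/-- The mate of a closer `j` is the last `i < j` for which the word on `[i, j]` reduces to `1`, so
no pairing of the same word gives `j` a later mate. -/
theorem Unrolled.mate_le (U : Unrolled n u S M) {S' : ℤ → Prop} {M' : ℤ → ℤ → Prop}
    (U' : Unrolled n u S' M') {i i' j : ℤ} (h : M i j) (h' : M' i' j) : i' ≤ i := by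
  by_contra! hlt
  have hj' := U'.lt h'
  obtain ⟨l, rfl⟩ : ∃ l : ℕ, i' = i + l := ⟨(i' - i).toNat, by omega⟩
  obtain ⟨m, rfl⟩ : ∃ m : ℕ, j = i + l + m := ⟨(j - (i + l)).toNat, by omega⟩
  have e1 := U'.mk_seg_eq_one (by omega) h'
  have e2 := U.mk_seg_eq_one (i := i) (m := l + m) (by omega) (by push_cast; rwa [← add_assoc])
  rw [add_assoc, seg_add, ← FreeGroup.mul_mk, e1, mul_one] at e2
  exact U.mk_seg_ne_one h (by omega) (by omega) e2

/-- Read from a through string `p`, the point `j` is a closer exactly when its letter cancels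
against the last letter of the reduction of the word on `[p, j)`. -/
theorem Unrolled.out_iff (U : Unrolled n u S M) {p : ℤ} (hp : S p) {m : ℕ} (hm : 0 < m) :
    Out S M (p + m) ↔ (FreeGroup.reduce (seg u p m)).getLast? ≠ some (linv (u (p + m))) := by
  obtain ⟨m, rfl⟩ : ∃ m', m = m' + 1 := ⟨m - 1, by omega⟩
  obtain ⟨L, hL⟩ := U.exists_stack (p := p) (Or.inl hp) m
    fun j hj => (U.not_S_left hj hp).elim
  rw [hL.reduce_eq U]
  obtain ⟨x, L, rfl⟩ := List.exists_cons_of_ne_nil (List.ne_nil_of_mem hL.mem)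
  obtain ⟨hx, hb⟩ := hL.top x (by simp)
  simp only [List.map_cons, List.getLast?_reverse, List.head?_cons, ne_eq, Option.some.injEq]
  refine ⟨fun ho => U.adm (hL.out x (by simp)) ho hx hb, fun hne => ?_⟩
  rcases U.total (p + (m + 1 : ℕ)) with ho | ⟨i, hi⟩
  · exact ho
  · obtain rfl := hL.top_eq U hi
    exact absurd (by rw [U.inv hi, linv_linv]) hne

/-- Through strings stay on the stack for ever, so the length of the reduction grows with the
number of periods. -/
theorem Unrolled.lt_length (U : Unrolled n u S M) (hn : 0 < n) {p : ℤ} (hp : S p) {m k : ℕ}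
    (hk : k * n < m) : k < (FreeGroup.reduce (seg u p m)).length := by
  obtain ⟨m, rfl⟩ : ∃ m', m = m' + 1 := ⟨m - 1, by omega⟩
  obtain ⟨L, hL⟩ := U.exists_stack (p := p) (Or.inl hp) m
    fun j hj => (U.not_S_left hj hp).elim
  rw [hL.reduce_eq U]
  let f : ℕ → ℤ := fun i => p + (i : ℤ) * n
  have hf : Function.Injective f := by
    intro x y hxy
    have h1 : (x : ℤ) * n = y * n := by simpa [f] using hxy
    have h2 : (n : ℤ) ≠ 0 := by omega
    exact_mod_cast mul_right_cancel₀ h2 h1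
  have hsub : (Finset.range (k + 1)).image f ⊆ L.toFinset := by
    intro z hz
    obtain ⟨i, hi, rfl⟩ := Finset.mem_image.1 hz
    have hik : i * n ≤ k * n := Nat.mul_le_mul_right n (by simpa [Nat.lt_succ_iff] using hi)
    have h1 : (i : ℤ) * n < (m + 1 : ℕ) := by exact_mod_cast lt_of_le_of_lt hik hk
    have h0 : (0 : ℤ) ≤ (i : ℤ) * n := by positivity
    exact List.mem_toFinset.2
      (hL.sing _ (U.periodic p i hp) (by simp only [f]; omega) (by simp only [f]; omega))
  have h1 := Finset.card_le_card hsub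
  rw [Finset.card_image_of_injective _ hf, Finset.card_range] at h1
  have h2 := List.toFinset_card_le L
  simp only [List.length_reverse, List.length_map]
  omega

/-- Two unrolled admissible pairings of the same word have the same outward points: seen from far
enough to the left, the last letter of the reduction does not depend on the starting point. -/
theorem Unrolled.out_iff_out (hn : 0 < n) (U : Unrolled n u S M) {S' : ℤ → Prop}
    {M' : ℤ → ℤ → Prop} (U' : Unrolled n u S' M') (j : ℤ) : Out S M j ↔ Out S' M' j := by
  obtain ⟨s, hs⟩ := U.nonempty
  obtain ⟨s', hs'⟩ := U'.nonempty
  have hn1 : (1 : ℤ) ≤ n := by omega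
  -- move `s'` to the left of `s`; `d` is the distance that has to be outgrown
  obtain ⟨t, d, ht, hd⟩ : ∃ (t : ℤ) (d : ℕ), S' t ∧ s = t + d := by
    refine ⟨s' + (-|s' - s|) * n, (s - (s' + (-|s' - s|) * n)).toNat, U'.periodic _ _ hs', ?_⟩
    have h1 : |s' - s| ≤ |s' - s| * n := le_mul_of_one_le_right (abs_nonneg _) hn1
    have h2 := le_abs_self (s' - s)
    rw [neg_mul]
    omega
  -- move both starting points to the left by `K` periods
  let K : ℤ := |s - j| + d + 1
  have hK : |s - j| + 1 + d * n ≤ K * n := by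
    have h1 : |s - j| + 1 ≤ (|s - j| + 1) * n :=
      le_mul_of_one_le_right (by positivity) hn1
    have h2 : K * n = (|s - j| + 1) * n + d * n := by simp only [K]; ring
    omega
  have hsj := le_abs_self (s - j)
  have hdn : (0 : ℤ) ≤ d * n := by positivity
  obtain ⟨m, hm⟩ : ∃ m : ℕ, j = s + (-K) * n + m :=
    ⟨(j - (s + (-K) * n)).toNat, by rw [neg_mul]; omega⟩
  have hdm : d * n < m := by
    have : (d : ℤ) * n < m := by rw [neg_mul] at hm; omega
    exact_mod_cast this
  have hp := U.periodic s (-K) hs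
  have hp' := U'.periodic t (-K) ht
  have hlen := U.lt_length hn hp hdm
  have hj' : j = t + (-K) * n + (d + m : ℕ) := by push_cast; rw [hm, hd]; ring
  have e1 := U.out_iff hp (m := m) (by omega)
  have e2 := U'.out_iff hp' (m := d + m) (by omega)
  rw [← hm] at e1
  rw [← hj', seg_add, getLast?_reduce_append, show t + (-K) * n + d = s + (-K) * n by
    rw [hd]; ring] at e2
  · rw [e1, e2]
  · rw [length_seg, show t + (-K) * n + d = s + (-K) * n by rw [hd]; ring]
    exact hlen

theorem Unrolled.mate_imp (hn : 0 < n) (U : Unrolled n u S M) {S' : ℤ → Prop}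
    {M' : ℤ → ℤ → Prop} (U' : Unrolled n u S' M') {i j : ℤ} (h : M i j) : M' i j := by
  have h1 : ¬ Out S' M' j := fun h2 => U.not_out h ((U.out_iff_out hn U' j).2 h2)
  obtain ⟨i', hi'⟩ := (U'.total j).resolve_left h1
  rwa [le_antisymm (U'.mate_le U hi' h) (U.mate_le U' h hi')]

end

/-! ### Blocks of a half-pairing -/

section

variable {n : ℕ} (π : HalfPairing n)

theorem Rel.refl (x : Fin n) : Rel π.P x x := by
  obtain ⟨B, hB, hx⟩ := π.P.exists_mem (Finset.mem_univ x)
  exact ⟨B, hB, hx, hx⟩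

variable {π}

theorem Rel.symm {x y : Fin n} : Rel π.P x y → Rel π.P y x := by
  rintro ⟨B, hB, hx, hy⟩
  exact ⟨B, hB, hy, hx⟩

theorem Rel.trans {x y z : Fin n} : Rel π.P x y → Rel π.P y z → Rel π.P x z := by
  rintro ⟨B, hB, hx, hy⟩ ⟨C, hC, hy', hz⟩
  obtain rfl := π.P.eq_of_mem_parts hB hC hy hy'
  exact ⟨B, hB, hx, hz⟩

theorem Rel.eq_of_isSingleton {x y : Fin n} : Rel π.P x y → IsSingleton π.P x → x = y := by
  rintro ⟨B, hB, hx, hy⟩ ⟨C, hC, hx', hcard⟩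
  obtain rfl := π.P.eq_of_mem_parts hB hC hx hx'
  exact Finset.card_le_one.1 hcard.le x hx y hy

theorem Pairs.symm {x y : Fin n} (h : Pairs π x y) : Pairs π y x :=
  ⟨h.1.symm, h.2.symm⟩

theorem Pairs.unique {x y z : Fin n} (hy : Pairs π x y) (hz : Pairs π x z) : y = z := by
  obtain ⟨hxy, B, hB, hx, hyB⟩ := hy
  obtain ⟨hxz, C, hC, hx', hzC⟩ := hz
  obtain rfl := π.P.eq_of_mem_parts hB hC hx hx'
  by_contra hyz
  have h3 : ({x, y, z} : Finset (Fin n)).card = 3 := by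
    rw [Finset.card_eq_three]
    exact ⟨x, y, z, hxy, hxz, hyz, rfl⟩
  have hsub : ({x, y, z} : Finset (Fin n)) ⊆ B := by
    intro t ht
    simp only [Finset.mem_insert, Finset.mem_singleton] at ht
    rcases ht with rfl | rfl | rfl <;> assumption
  have := Finset.card_le_card hsub
  have := π.card_le B hB
  omega

theorem exists_pairs {x : Fin n} (h : ¬ IsSingleton π.P x) : ∃ y, Pairs π x y := by
  obtain ⟨B, hB, hx⟩ := π.P.exists_mem (Finset.mem_univ x)
  by_contra! hne
  apply h
  refine ⟨B, hB, hx, Finset.card_eq_one.2 ⟨x, ?_⟩⟩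
  refine Finset.eq_singleton_iff_unique_mem.2 ⟨hx, fun y hy => ?_⟩
  by_contra hyx
  exact hne y ⟨fun e => hyx e.symm, B, hB, hx, hy⟩

theorem Pairs.not_isSingleton {x y : Fin n} (h : Pairs π x y) : ¬ IsSingleton π.P x :=
  fun hs => h.1 (h.2.eq_of_isSingleton hs)

theorem RelTilde.symm {x y : Fin n} : RelTilde π.P x y → RelTilde π.P y x := by
  rintro (h | h)
  · exact Or.inl h.symm
  · exact Or.inr h.symm

theorem RelTilde.trans {x y z : Fin n} :
    RelTilde π.P x y → RelTilde π.P y z → RelTilde π.P x z := by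
  rintro (h | h) (h' | h')
  · exact Or.inl (h.trans h')
  · obtain rfl := h.symm.eq_of_isSingleton h'.1
    exact Or.inr h'
  · obtain rfl := h'.eq_of_isSingleton h.2
    exact Or.inr h
  · exact Or.inr ⟨h.1, h'.2⟩

end

/-! ### Unrolling the circle -/

section

variable {n : ℕ}

/-- The position on the circle of the integer `x`, when positions are counted from `a`. -/
def pos (hn : 0 < n) (a x : ℤ) : Fin n :=
  ⟨((x - a) % n).toNat, by
    have h1 := Int.emod_nonneg (x - a) (b := n) (by omega)
    have h2 := Int.emod_lt_of_pos (x - a) (b := n) (by omega)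
    omega⟩

variable (hn : 0 < n) (a : ℤ)

theorem pos_val (x : ℤ) : ((pos hn a x : Fin n) : ℤ) = (x - a) % n := by
  have h1 := Int.emod_nonneg (x - a) (b := n) (by omega)
  simp [pos, h1]

theorem pos_eq_iff (x y : ℤ) : pos hn a x = pos hn a y ↔ (n : ℤ) ∣ x - y := by
  rw [← Fin.val_inj, ← Int.natCast_inj, pos_val, pos_val,
    Int.emod_eq_emod_iff_emod_sub_eq_zero, ← Int.dvd_iff_emod_eq_zero]
  simp

theorem pos_add_mul (x k : ℤ) : pos hn a (x + k * n) = pos hn a x := by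
  rw [pos_eq_iff]
  exact ⟨k, by ring⟩

theorem pos_add_n (x : ℤ) : pos hn a (x + n) = pos hn a x := by
  simpa using pos_add_mul hn a x 1

theorem pos_inj {x y : ℤ} (h : pos hn a x = pos hn a y) (h1 : x < y + n) (h2 : y < x + n) :
    x = y := by
  rw [pos_eq_iff] at h
  have := Int.eq_zero_of_abs_lt_dvd h (by rw [abs_lt]; omega)
  omega

theorem exists_pos_eq (f : Fin n) (c : ℤ) : ∃ x, c ≤ x ∧ x < c + n ∧ pos hn a x = f := by
  have h1 := Int.emod_nonneg (f + a - c) (b := n) (by omega)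
  have h2 := Int.emod_lt_of_pos (f + a - c) (b := n) (by omega)
  refine ⟨c + (f + a - c) % n, by omega, by omega, ?_⟩
  rw [← Fin.val_inj, ← Int.natCast_inj, pos_val]
  have h3 : (c + (f + a - c) % n - a) % n = (f : ℤ) % n := by
    rw [Int.emod_eq_emod_iff_emod_sub_eq_zero, ← Int.dvd_iff_emod_eq_zero]
    have := Int.dvd_self_sub_emod (x := f + a - c) (m := n)
    obtain ⟨k, hk⟩ := this
    exact ⟨-k, by linarith⟩
  rw [h3, Int.emod_eq_of_lt] <;> omega

theorem pos_sub_mod {c x : ℤ} (h1 : c ≤ x) (h2 : x < c + n) :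
    ((((pos hn a x).val + n - (pos hn a c).val) % n : ℕ) : ℤ) = x - c := by
  have hlt := (pos hn a c).isLt
  rw [Int.natCast_mod, Int.natCast_sub (by omega), Int.natCast_add, pos_val, pos_val]
  have : ((x - a) % n + n - (c - a) % n) % n = (x - c) % n := by
    rw [Int.emod_eq_emod_iff_emod_sub_eq_zero, ← Int.dvd_iff_emod_eq_zero]
    obtain ⟨k, hk⟩ := Int.dvd_self_sub_emod (x := x - a) (m := n)
    obtain ⟨l, hl⟩ := Int.dvd_self_sub_emod (x := c - a) (m := n)
    exact ⟨-k + l + 1, by linarith⟩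
  rw [this, Int.emod_eq_of_lt] <;> omega

theorem inCyc_pos {c x y : ℤ} (hx : c ≤ x) (hx' : x < c + n) (hy : c ≤ y) (hy' : y < c + n) :
    InCyc (pos hn a c) (pos hn a y) (pos hn a x) ↔ x ≤ y := by
  unfold InCyc
  rw [← Int.ofNat_le, pos_sub_mod hn a hx hx', pos_sub_mod hn a hy hy']
  omega

theorem cnext_pos (x : ℤ) : cnext (pos hn a x) = pos hn a (x + 1) := by
  rw [← Fin.val_inj, ← Int.natCast_inj, pos_val]
  simp only [cnext]
  rw [Int.natCast_mod, Int.natCast_add, pos_val]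
  rw [Int.emod_eq_emod_iff_emod_sub_eq_zero, ← Int.dvd_iff_emod_eq_zero]
  obtain ⟨k, hk⟩ := Int.dvd_self_sub_emod (x := x - a) (m := n)
  exact ⟨-k, by push_cast; linarith⟩

theorem cprev_pos (x : ℤ) : cprev (pos hn a x) = pos hn a (x - 1) := by
  rw [← Fin.val_inj, ← Int.natCast_inj, pos_val]
  simp only [cprev]
  rw [Int.natCast_mod, Int.natCast_sub (by omega), Int.natCast_add, pos_val]
  rw [Int.emod_eq_emod_iff_emod_sub_eq_zero, ← Int.dvd_iff_emod_eq_zero]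
  obtain ⟨k, hk⟩ := Int.dvd_self_sub_emod (x := x - a) (m := n)
  exact ⟨-k + 1, by push_cast; linarith⟩

/-- Being non-crossing does not depend on where the circle is cut open. -/
theorem NonCrossingRel.cyclic {r : Fin n → Fin n → Prop} (hr : NonCrossingRel r)
    (symm : ∀ {x y}, r x y → r y x) (trans : ∀ {x y z}, r x y → r y z → r x z)
    {i j k l : ℤ} (hij : i < j) (hjk : j < k) (hkl : k < l) (hli : l < i + n)
    (hik : r (pos hn a i) (pos hn a k)) (hjl : r (pos hn a j) (pos hn a l)) :
    r (pos hn a i) (pos hn a j) := by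
  -- `c` is the start of the period containing `i`
  obtain ⟨c, hc1, hc2, hc⟩ : ∃ c : ℤ, c ≤ i ∧ i < c + n ∧
      ∀ x, c ≤ x → x < c + n → ((pos hn a x : Fin n) : ℤ) = x - c := by
    have h1 := Int.emod_nonneg (i - a) (b := n) (by omega)
    have h2 := Int.emod_lt_of_pos (i - a) (b := n) (by omega)
    refine ⟨i - (i - a) % n, by omega, by omega, fun x hx hx' => ?_⟩
    rw [pos_val]
    have h3 : (x - a) % n = (x - (i - (i - a) % n)) % n := by
      rw [Int.emod_eq_emod_iff_emod_sub_eq_zero, ← Int.dvd_iff_emod_eq_zero]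
      obtain ⟨m, hm⟩ := Int.dvd_self_sub_emod (x := i - a) (m := n)
      exact ⟨m, by linarith⟩
    rw [h3, Int.emod_eq_of_lt] <;> omega
  have hhigh : ∀ x, c + n ≤ x → x < c + n + n → ((pos hn a x : Fin n) : ℤ) = x - n - c := by
    intro x h1 h2
    rw [← hc (x - n) (by omega) (by omega), ← pos_add_n hn a (x - n), sub_add_cancel]
  have ei := hc i hc1 hc2
  by_cases hj : j < c + n
  · have ej := hc j (by omega) hj
    by_cases hk : k < c + n
    · have ek := hc k (by omega) hk
      by_cases hl : l < c + n
      · have el := hc l (by omega) hl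
        exact hr _ _ _ _ (by omega) (by omega) (by omega) hik hjl
      · have el := hhigh l (by omega) (by omega)
        exact trans (symm (hr (pos hn a l) (pos hn a i) (pos hn a j) (pos hn a k)
          (by omega) (by omega) (by omega) (symm hjl) hik)) (symm hjl)
    · have ek := hhigh k (by omega) (by omega)
      have el := hhigh l (by omega) (by omega)
      exact trans hik (trans (hr (pos hn a k) (pos hn a l) (pos hn a i) (pos hn a j)
          (by omega) (by omega) (by omega) (symm hik) (symm hjl)) (symm hjl))
  · have ej := hhigh j (by omega) (by omega)
    have ek := hhigh k (by omega) (by omega)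
    have el := hhigh l (by omega) (by omega)
    exact trans hik (symm (hr (pos hn a j) (pos hn a k) (pos hn a l) (pos hn a i)
          (by omega) (by omega) (by omega) hjl (symm hik)))

/-- The through strings of `π` on the unrolled circle. -/
def liftS (π : HalfPairing n) (x : ℤ) : Prop := IsSingleton π.P (pos hn a x)

/-- The pairs of `π` on the unrolled circle; of the two arcs joining paired points, the one that
encloses no through string is chosen. -/
def liftM (π : HalfPairing n) (i j : ℤ) : Prop :=
  i < j ∧ j < i + n ∧ Pairs π (pos hn a i) (pos hn a j) ∧ ∀ z, i ≤ z → z ≤ j → ¬ liftS hn a π z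

variable {π : HalfPairing n}

theorem exists_liftS (π : HalfPairing n) (c : ℤ) : ∃ x, c ≤ x ∧ x < c + n ∧ liftS hn a π x := by
  obtain ⟨f, hf⟩ := π.exists_singleton
  obtain ⟨x, h1, h2, rfl⟩ := exists_pos_eq hn a f c
  exact ⟨x, h1, h2, hf⟩

theorem liftM_of_pairs {x y : ℤ} (hxy : x < y) (hyx : y < x + n)
    (h : Pairs π (pos hn a x) (pos hn a y)) : liftM hn a π x y ∨ liftM hn a π y (x + n) := by
  have hx : ¬ liftS hn a π x := h.not_isSingleton
  have hy : ¬ liftS hn a π y := h.symm.not_isSingleton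
  by_cases h1 : ∀ z, x ≤ z → z ≤ y → ¬ liftS hn a π z
  · exact Or.inl ⟨hxy, hyx, h, h1⟩
  refine Or.inr ⟨by omega, by omega, by rw [pos_add_n]; exact h.symm, fun z' hz1 hz2 hz' => ?_⟩
  push Not at h1
  obtain ⟨z, hxz, hzy, hz⟩ := h1
  have hzx : z ≠ x := by rintro rfl; exact hx hz
  have hzy' : z ≠ y := by rintro rfl; exact hy hz
  have hzx' : z' ≠ x + n := by
    rintro rfl
    rw [liftS, pos_add_n] at hz'
    exact hx hz'
  have hzy'' : z' ≠ y := by rintro rfl; exact hy hz'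
  rcases π.nc_tilde.cyclic hn a RelTilde.symm RelTilde.trans (i := x) (j := z) (k := y) (l := z')
    (by omega) (by omega) (by omega) (by omega) (Or.inl h.2) (Or.inr ⟨hz, hz'⟩) with h2 | h2
  · exact hzx (pos_inj hn a (h2.symm.eq_of_isSingleton hz) (by omega) (by omega))
  · exact hx h2.1

theorem liftM_sub {x y : ℤ} (h : liftM hn a π y (x + n)) : liftM hn a π (y - n) x := by
  obtain ⟨h1, h2, h3, h4⟩ := h
  have e : pos hn a (y - n) = pos hn a y := by rw [← pos_add_n hn a (y - n), sub_add_cancel]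
  refine ⟨by omega, by omega, by rwa [e, ← pos_add_n hn a x], fun z hz1 hz2 hz => ?_⟩
  refine h4 (z + n) (by omega) (by omega) ?_
  rwa [liftS, pos_add_n]

theorem liftM_total (x : ℤ) : Out (liftS hn a π) (liftM hn a π) x ∨ ∃ i, liftM hn a π i x := by
  by_cases hx : liftS hn a π x
  · exact Or.inl (Or.inl hx)
  obtain ⟨f, hf⟩ := exists_pairs hx
  obtain ⟨y, h1, h2, rfl⟩ := exists_pos_eq hn a f x
  have hne : y ≠ x := by rintro rfl; exact hf.1 rfl
  rcases liftM_of_pairs hn a (by omega) h2 hf with h | h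
  · exact Or.inl (Or.inr ⟨y, h⟩)
  · exact Or.inr ⟨_, liftM_sub hn a h⟩

theorem liftM_right_unique {i j j' : ℤ} (h : liftM hn a π i j) (h' : liftM hn a π i j') :
    j = j' := by
  obtain ⟨h1, h2, h3, -⟩ := h
  obtain ⟨h1', h2', h3', -⟩ := h'
  exact pos_inj hn a (h3.unique h3') (by omega) (by omega)

theorem liftM_left_unique {i i' j : ℤ} (h : liftM hn a π i j) (h' : liftM hn a π i' j) :
    i = i' := by
  obtain ⟨h1, h2, h3, -⟩ := h
  obtain ⟨h1', h2', h3', -⟩ := h'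
  exact pos_inj hn a (h3.symm.unique h3'.symm) (by omega) (by omega)

theorem liftM_balanced {i j : ℤ} (h : liftM hn a π i j) : Balanced (liftM hn a π) i j := by
  obtain ⟨h1, h2, h3, h4⟩ := id h
  intro x hix hxj
  have hx : ¬ liftS hn a π x := h4 x hix.le hxj.le
  have hni : pos hn a i ≠ pos hn a x := fun e => by
    have := pos_inj hn a e (by omega) (by omega)
    omega
  have hnj : pos hn a j ≠ pos hn a x := fun e => by
    have := pos_inj hn a e (by omega) (by omega)
    omega
  rcases liftM_total hn a (π := π) x with (hS | ⟨y, hy⟩) | ⟨y, hy⟩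
  · exact absurd hS hx
  · obtain ⟨g1, g2, g3, g4⟩ := id hy
    refine ⟨y, by omega, ?_, Or.inl hy⟩
    by_contra hjy
    have hyj : y ≠ j := by
      rintro rfl
      have := liftM_left_unique hn a h hy
      omega
    by_cases hyi : y < i + n
    · have hr := π.nc.cyclic hn a Rel.symm Rel.trans hix hxj (by omega) hyi h3.2 g3.2
      exact hnj (h3.unique ⟨hni, hr⟩)
    · -- the two arcs together contain a whole period, hence a through string
      obtain ⟨z, hz1, hz2, hz⟩ := exists_liftS hn a π i
      by_cases hzx : z ≤ x
      · exact h4 z hz1 (by omega) hz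
      · exact g4 z (by omega) (by omega) hz
  · obtain ⟨g1, g2, g3, g4⟩ := id hy
    refine ⟨y, ?_, by omega, Or.inr hy⟩
    by_contra hyi'
    have hyi : y ≠ i := by
      rintro rfl
      have := liftM_right_unique hn a h hy
      omega
    by_cases hjy : j < y + n
    · have hr := π.nc.cyclic hn a Rel.symm Rel.trans (show y < i by omega) hix hxj hjy g3.2 h3.2
      exact hnj (h3.unique ⟨hni, hr.symm.trans g3.2⟩)
    · obtain ⟨z, hz1, hz2, hz⟩ := exists_liftS hn a π y
      by_cases hzx : z ≤ x
      · exact g4 z hz1 hzx hz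
      · exact h4 z (by omega) (by omega) hz

theorem outOriented_pos {i : ℤ} (h : Out (liftS hn a π) (liftM hn a π) i) :
    OutOriented π (pos hn a i) := by
  rcases h with h | ⟨s, h1, h2, h3, h4⟩
  · exact Or.inl h
  · refine Or.inr ⟨pos hn a s, h3, fun f hf => ?_⟩
    obtain ⟨x, hx1, hx2, rfl⟩ := exists_pos_eq hn a f i
    exact h4 x hx1 ((inCyc_pos hn a hx1 hx2 h1.le h2).1 hf)

/-- An admissible half-pairing of a rotation of a word unrolls to an admissible pairing of the
periodic bi-infinite word. -/
theorem unrolled_lift {N : ℕ} {w' : Fin n → Letter N} (u : ℤ → Letter N)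
    (hu : ∀ x, u x = w' (pos hn a x)) (hπ : Admissible w' π) :
    Unrolled n u (liftS hn a π) (liftM hn a π) where
  periodic x k h := by rwa [liftS, pos_add_mul]
  nonempty := (exists_liftS hn a π 0).imp fun _ h => h.2.2
  lt h := h.1
  right_unique h h' := liftM_right_unique hn a h h'
  left_unique h h' := liftM_left_unique hn a h h'
  not_chain {i j k} hij hjk := by
    obtain ⟨h1, h2, h3, h4⟩ := hij
    obtain ⟨g1, g2, g3, g4⟩ := hjk
    -- `i` and `k` are both paired with `j`, so they are one period apart
    have e := h3.symm.unique g3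
    rw [← pos_add_n hn a i] at e
    have := pos_inj hn a e (by omega) (by omega)
    obtain ⟨z, hz1, hz2, hz⟩ := exists_liftS hn a π i
    by_cases hzj : z ≤ j
    · exact h4 z hz1 hzj hz
    · exact g4 z (by omega) (by omega) hz
  not_S_left h := h.2.2.2 _ le_rfl h.1.le
  not_S_right h := h.2.2.2 _ h.1.le le_rfl
  total := liftM_total hn a
  balanced h := liftM_balanced hn a h
  inv h := by
    rw [hu, hu]
    exact hπ.1.1 _ _ h.2.2.1.symm
  adm {i j} hi hj hij hb := by
    rcases lt_trichotomy j (i + n) with hlt | heq | hgt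
    · rw [hu, hu]
      refine hπ.2 _ _ ⟨outOriented_pos hn a hi, outOriented_pos hn a hj, ?_⟩
      rw [cnext_pos, cprev_pos]
      by_cases hj1 : j = i + 1
      · exact Or.inl (by rw [hj1])
      right
      intro f hf
      obtain ⟨x, hx1, hx2, rfl⟩ := exists_pos_eq hn a f (i + 1)
      have hxj := (inCyc_pos hn a hx1 hx2 (by omega) (by omega)).1 hf
      obtain ⟨v, hv1, hv2, hv⟩ := hb x (by omega) (by omega)
      have hp : Pairs π (pos hn a x) (pos hn a v) := by
        rcases hv with hv | hv
        · exact hv.2.2.1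
        · exact hv.2.2.1.symm
      exact ⟨pos hn a v, hp.1.symm,
        (inCyc_pos hn a (by omega) (by omega) (by omega) (by omega)).2 (by omega), hp⟩
    · rw [hu, hu, heq, pos_add_n]
      exact linv_ne_self _
    · -- a balanced interval contains no through string, so it is shorter than a period
      exfalso
      obtain ⟨z, hz1, hz2, hz⟩ := exists_liftS hn a π (i + 1)
      obtain ⟨v, -, -, hv | hv⟩ := hb z (by omega) (by omega)
      · exact hv.2.2.2 z le_rfl hv.1.le hz
      · exact hv.2.2.2 z hv.1.le le_rfl hz

/-- Rotated back to the original indexing, every pair of `πa` is a pair of `πb` as soon as every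
unrolled pair is. -/
theorem rel_of_liftM_imp (b : ℤ) {πa πb : HalfPairing n}
    (h : ∀ i j, liftM hn a πa i j → liftM hn b πb i j) {x y : ℤ} (hxy : x < y)
    (hyx : y < x + n) (hr : Rel πa.P (pos hn a x) (pos hn a y)) :
    Rel πb.P (pos hn b x) (pos hn b y) := by
  have hne : pos hn a x ≠ pos hn a y := fun e => by
    have := pos_inj hn a e (by omega) (by omega)
    omega
  rcases liftM_of_pairs hn a hxy hyx ⟨hne, hr⟩ with h1 | h1
  · exact (h _ _ h1).2.2.1.2
  · have := (h _ _ h1).2.2.1.2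
    rw [pos_add_n] at this
    exact this.symm

theorem pos_natCast (x a : Fin n) : pos hn (a : ℕ) (x : ℕ) = csub x a := by
  rw [← Fin.val_inj, ← Int.natCast_inj, pos_val]
  simp only [csub]
  rw [Int.natCast_mod, Int.natCast_sub (by omega), Int.natCast_add]
  rw [Int.emod_eq_emod_iff_emod_sub_eq_zero, ← Int.dvd_iff_emod_eq_zero]
  exact ⟨-1, by ring⟩

theorem cadd_pos (a : Fin n) (x : ℤ) : cadd a (pos hn (a : ℕ) x) = pos hn 0 x := by
  rw [← Fin.val_inj, ← Int.natCast_inj, pos_val]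
  simp only [cadd]
  rw [Int.natCast_mod, Int.natCast_add, pos_val]
  rw [Int.emod_eq_emod_iff_emod_sub_eq_zero, ← Int.dvd_iff_emod_eq_zero]
  obtain ⟨k, hk⟩ := Int.dvd_self_sub_emod (x := x - (a : ℕ)) (m := n)
  exact ⟨-k, by linarith⟩

theorem rel_imp {N : ℕ} (w : Fin n → Letter N) (a b : Fin n) (πa πb : HalfPairing n)
    (hπa : Admissible (fun j => w (cadd a j)) πa) (hπb : Admissible (fun j => w (cadd b j)) πb)
    (x y : Fin n) (h : Rel πa.P (csub x a) (csub y a)) : Rel πb.P (csub x b) (csub y b) := by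
  have hn : 0 < n := a.pos
  let u : ℤ → Letter N := fun x => w (pos hn 0 x)
  have Ua := unrolled_lift hn (a : ℕ) u (fun x => by rw [cadd_pos hn a x]) hπa
  have Ub := unrolled_lift hn (b : ℕ) u (fun x => by rw [cadd_pos hn b x]) hπb
  have hM : ∀ i j, liftM hn (a : ℕ) πa i j → liftM hn (b : ℕ) πb i j :=
    fun i j hij => Ua.mate_imp hn Ub hij
  rw [← pos_natCast hn, ← pos_natCast hn] at h ⊢
  rcases lt_trichotomy x y with hxy | rfl | hxy
  · exact rel_of_liftM_imp hn _ _ hM (by omega) (by omega) h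
  · exact Rel.refl πb _
  · exact (rel_of_liftM_imp hn _ _ hM (by omega) (by omega) h.symm).symm

end

/-- If `w'` and `w''` are two cyclic permutations of `w` (starting at positions
`a` and `b` respectively), both with good reduction, then their admissible
half-pairings, rotated back to the original indexing of the letters of `w`,
coincide: `w` carries a canonical half-pairing. -/
theorem admissible_halfPairing_independent_of_rotation (N n k : ℕ) (hk : 1 ≤ k)
    (w : Fin n → Letter N) (v : List (Letter N))
    (hv : CycReducesTo (List.ofFn w) v) (hvc : CycReduced v) (hvk : v.length = k)
    (a b : Fin n)
    (ha : GoodReduction (List.ofFn (fun j => w (cadd a j))))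
    (hb : GoodReduction (List.ofFn (fun j => w (cadd b j))))
    (πa πb : HalfPairing n)
    (hπa : Admissible (fun j => w (cadd a j)) πa)
    (hπb : Admissible (fun j => w (cadd b j)) πb) :
    ∀ x y : Fin n, Rel πa.P (csub x a) (csub y a) ↔ Rel πb.P (csub x b) (csub y b) := by
  exact fun x y => ⟨rel_imp w a b πa πb hπa hπb x y, rel_imp w b a πb πa hπb hπa x y⟩

end NCC
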